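/- Let γ ∈ (0,1]. There is a constant C depending only on γ with the following property. Let h > 0, T = [0,h]³, and let T = T⁻ ∪ T⁺ be a partition of T into two disjoint Lebesgue-measurable sets. Fix F ∈ ℝ³, a unit vector n̄, and 0 < β⁻ ≤ β⁺, and suppose there exists a tetrahedron P with vol(P) ≥ γh³ and F ∈ closure(P) such that either P ⊆ T⁻ or P ⊆ T⁺. Then for every p ∈ Q₁, writing q = C_T(p), the inverse inequality ( ‖∇p‖²_{L²(T⁻)} + ‖∇q‖²_{L²(T⁺)} )^{1/2} ≤ C (β⁺/β⁻) h^{−1} ( ‖p‖²_{L²(T⁻)} + ‖q‖²_{L²(T⁺)} )^{1/2} holds. (This is the inverse inequality of Theorem 4.10, ‖∇φ_T‖_{L²(T)} ≤ C (β⁺/β⁻) h^{−1} ‖φ_T‖_{L²(T)}, for trilinear IFE functions on an interface element.) -/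

import Mathlib

/-!
The interface plays only a minor role: everything reduces to a Remez-type inequality for `Q₁`
on an arbitrary measurable subset `S` of the cube with `|S| ≥ γ h³`,
`sup_{cube} ‖∇p‖² ≤ K h⁻⁵ ∫_S p²`  (`exists_gradient_bound`).

After rescaling to the unit cube, this follows from a lower bound on `|p|` away from a set of volume
at most `γ / 2` (`exists_sublevel_bound`), uniform over polynomials with coefficient vector of
norm one. A nonzero element of `Q₁` has a null zero set (`volume_pol_eq_zero`), hence small
sublevel sets; compactness of the unit sphere of coefficients makes this uniform.

The tetrahedron enters only to make one of the two pieces, say `S`, satisfy `|S| ≥ γ h³`, and to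
place `F` in the cube. If `S = T⁻`, the Remez inequality for `p` bounds `∇p` on the cube, in
particular at `F`, and hence `∇(C_T p)`. If `S = T⁺`, it is applied to `q = C_T p`, and `p` is
recovered as the extension of `q` with `β⁻` and `β⁺` exchanged (`CT_CT`), which costs the
factor `β⁺ / β⁻`.
-/

open MeasureTheory
open scoped RealInnerProductSpace ENNReal

noncomputable section

abbrev V3 : Type := EuclideanSpace ℝ (Fin 3)

/-- `Q₁`: the space of trilinear polynomials on `ℝ³`. -/
def IsQ1 (p : V3 → ℝ) : Prop :=
  ∃ a₀ a₁ a₂ a₃ a₄ a₅ a₆ a₇ : ℝ, ∀ x : V3,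
    p x = a₀ + a₁ * x 0 + a₂ * x 1 + a₃ * x 2
      + a₄ * (x 0 * x 1) + a₅ * (x 0 * x 2) + a₆ * (x 1 * x 2)
      + a₇ * (x 0 * x 1 * x 2)

/-- The cube `T = [0,h]³`. -/
def cube (h : ℝ) : Set V3 := {X | ∀ i, X i ∈ Set.Icc (0:ℝ) h}

/-- `P` is a tetrahedron: the convex hull of four affinely independent points. -/
def IsTetra (P : Set V3) : Prop :=
  ∃ v : Fin 4 → V3, AffineIndependent ℝ v ∧ P = convexHull ℝ (Set.range v)

/-- The extension operator `C_T(p) = p + (β⁻/β⁺ − 1)(∇p(F)·n̄) L`, `L(X) = (X−F)·n̄`. -/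
def CT (βm βp : ℝ) (F nbar : V3) (p : V3 → ℝ) : V3 → ℝ :=
  fun X => p X + (βm / βp - 1) * (fderiv ℝ p F nbar) * ⟪X - F, nbar⟫

/-- `f` is a closed face of the cube `[0,h]³` with unit normal `nf`. -/
def IsFace (h : ℝ) (f : Set V3) (nf : V3) : Prop :=
  ∃ i : Fin 3, (nf = EuclideanSpace.single i 1 ∨ nf = -EuclideanSpace.single i 1) ∧
    (f = {X ∈ cube h | X i = 0} ∨ f = {X ∈ cube h | X i = h})

/-! ### Trilinear polynomials by coefficients -/

/-- The element of `Q₁` with coefficient vector `a`, in the ordering of `IsQ1`. -/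
def pol (a : Fin 8 → ℝ) (x : V3) : ℝ :=
  a 0 + a 1 * x 0 + a 2 * x 1 + a 3 * x 2
      + a 4 * (x 0 * x 1) + a 5 * (x 0 * x 2) + a 6 * (x 1 * x 2)
      + a 7 * (x 0 * x 1 * x 2)

/-- Coefficient vector of `u ↦ pol a (h • u)`. -/
def scaleCoeff (h : ℝ) (a : Fin 8 → ℝ) : Fin 8 → ℝ :=
  ![a 0, a 1 * h, a 2 * h, a 3 * h, a 4 * h ^ 2, a 5 * h ^ 2, a 6 * h ^ 2, a 7 * h ^ 3]

theorem isQ1_iff_exists_pol (p : V3 → ℝ) : IsQ1 p ↔ ∃ a, p = pol a := by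
  constructor
  · rintro ⟨a₀, a₁, a₂, a₃, a₄, a₅, a₆, a₇, h⟩
    exact ⟨![a₀, a₁, a₂, a₃, a₄, a₅, a₆, a₇], funext fun x => by rw [h x]; rfl⟩
  · rintro ⟨a, rfl⟩
    exact ⟨a 0, a 1, a 2, a 3, a 4, a 5, a 6, a 7, fun x => rfl⟩

theorem pol_smul (h : ℝ) (a : Fin 8 → ℝ) (u : V3) :
    pol a (h • u) = pol (scaleCoeff h a) u := by
  simp [pol, scaleCoeff]; ring

theorem continuous_pol (a : Fin 8 → ℝ) : Continuous (pol a) := by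
  unfold pol; fun_prop

theorem abs_pol_le (a : Fin 8 → ℝ) {u : V3} (hu : u ∈ cube 1) : |pol a u| ≤ 8 * ‖a‖ := by
  have ha : ∀ i, |a i| ≤ ‖a‖ := fun i => norm_le_pi_norm a i
  have hx : ∀ i, |u i| ≤ 1 := fun i => abs_le.2 ⟨by linarith [(hu i).1], (hu i).2⟩
  have hm : ∀ s t : ℝ, |s| ≤ 1 → |t| ≤ 1 → |s * t| ≤ 1 := fun s t hs ht => by
    rw [abs_mul]; exact mul_le_one₀ hs (abs_nonneg _) ht
  have hc : ∀ i, ∀ s : ℝ, |s| ≤ 1 → |a i * s| ≤ ‖a‖ := fun i s hs => by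
    rw [abs_mul]
    exact (mul_le_of_le_one_right (abs_nonneg _) hs).trans (ha i)
  have h0 := abs_le.1 (ha 0)
  have h1 := abs_le.1 (hc 1 _ (hx 0))
  have h2 := abs_le.1 (hc 2 _ (hx 1))
  have h3 := abs_le.1 (hc 3 _ (hx 2))
  have h4 := abs_le.1 (hc 4 _ (hm _ _ (hx 0) (hx 1)))
  have h5 := abs_le.1 (hc 5 _ (hm _ _ (hx 0) (hx 2)))
  have h6 := abs_le.1 (hc 6 _ (hm _ _ (hx 1) (hx 2)))
  have h7 := abs_le.1 (hc 7 _ (hm _ _ (hm _ _ (hx 0) (hx 1)) (hx 2)))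
  unfold pol
  exact abs_le.2 ⟨by linarith, by linarith⟩

/-! ### Null zero sets -/

/-- The set where a function affine in `x i` vanishes with nonzero slope is a graph over the
remaining coordinates; its translates in direction `i` are disjoint, so it is null. -/
theorem volume_affine_zero_slope_ne (i : Fin 3) (A B : V3 → ℝ) (hA : Continuous A)
    (hB : Continuous B) (hAi : ∀ x t, A (x + EuclideanSpace.single i t) = A x)
    (hBi : ∀ x t, B (x + EuclideanSpace.single i t) = B x) :
    volume {x : V3 | A x + B x * x i = 0 ∧ B x ≠ 0} = 0 := by
  have hms : MeasurableSet {x : V3 | A x + B x * x i = 0 ∧ B x ≠ 0} := by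
    refine MeasurableSet.inter ?_ ?_
    · exact (isClosed_eq (by fun_prop) continuous_const).measurableSet
    · exact (isOpen_ne_fun hB continuous_const).measurableSet
  let u : ℕ → V3 := fun n => EuclideanSpace.single i (1 / ((n : ℝ) + 1))
  refine Measure.addHaar_eq_zero_of_disjoint_translates volume u ?_ ?_ hms
  · refine (isBounded_iff_forall_norm_le).2 ⟨1, ?_⟩
    rintro _ ⟨n, rfl⟩
    have : |(n : ℝ) + 1| = n + 1 := abs_of_pos (by positivity)
    simp only [u, PiLp.norm_single, Real.norm_eq_abs, abs_div, abs_one, this]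
    rw [div_le_one (by positivity)]
    linarith [Nat.cast_nonneg (α := ℝ) n]
  · intro n m hnm
    refine Set.disjoint_left.2 ?_
    rintro y hy hy'
    simp only [Set.singleton_add] at hy hy'
    obtain ⟨s, ⟨hs, hs0⟩, rfl⟩ := hy
    obtain ⟨t, ⟨ht, ht0⟩, hst⟩ := hy'
    apply hnm
    simp only [u] at hst
    have eA : A t = A s := by
      rw [← hAi t (1 / ((m : ℝ) + 1)), add_comm t, hst, add_comm, hAi]
    have eB : B t = B s := by
      rw [← hBi t (1 / ((m : ℝ) + 1)), add_comm t, hst, add_comm, hBi]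
    have ei := congrArg (fun z : V3 => z i) hst
    simp at ei
    rw [eA, eB] at ht
    have hti : t i = s i := mul_left_cancel₀ hs0 (by linarith)
    rw [hti] at ei
    have := inv_injective (add_right_cancel ei)
    exact_mod_cast (add_right_cancel this).symm

/-- Induction step over the variables: vanishing of `A + B x i` is negligible when it is so for
the slope `B`, or for `A` when `B = 0`. -/
theorem volume_affine_zero (i : Fin 3) (A B : V3 → ℝ) (hA : Continuous A)
    (hB : Continuous B) (hAi : ∀ x t, A (x + EuclideanSpace.single i t) = A x)
    (hBi : ∀ x t, B (x + EuclideanSpace.single i t) = B x)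
    (h : volume {x | B x = 0} = 0 ∨ ((∀ x, B x = 0) ∧ volume {x | A x = 0} = 0)) :
    volume {x : V3 | A x + B x * x i = 0} = 0 := by
  rcases h with h | ⟨h0, h⟩
  · refine measure_mono_null (t := {x | A x + B x * x i = 0 ∧ B x ≠ 0} ∪ {x | B x = 0}) ?_
      (measure_union_null (volume_affine_zero_slope_ne i A B hA hB hAi hBi) h)
    intro x hx
    by_cases hb : B x = 0
    · exact Or.inr hb
    · exact Or.inl ⟨hx, hb⟩
  · simpa [h0] using h

theorem volume_zero_one_var (c d : ℝ) (h : ¬ (c = 0 ∧ d = 0)) :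
    volume {x : V3 | c + d * x 0 = 0} = 0 := by
  refine volume_affine_zero 0 (fun _ => c) (fun _ => d) (by fun_prop) (by fun_prop)
    (by simp) (by simp) ?_
  by_cases hd : d = 0
  · right
    have : c ≠ 0 := fun hc => h ⟨hc, hd⟩
    simp [hd, this]
  · left; simp [hd]

theorem volume_zero_two_var (c d e f : ℝ) (h : ¬ (c = 0 ∧ d = 0 ∧ e = 0 ∧ f = 0)) :
    volume {x : V3 | (c + d * x 0) + (e + f * x 0) * x 1 = 0} = 0 := by
  refine volume_affine_zero 1 (fun x => c + d * x 0) (fun x => e + f * x 0) (by fun_prop)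
    (by fun_prop) (by simp) (by simp) ?_
  by_cases hd : e = 0 ∧ f = 0
  · right
    refine ⟨by simp [hd], volume_zero_one_var c d ?_⟩
    tauto
  · left; exact volume_zero_one_var e f hd

theorem volume_pol_eq_zero {a : Fin 8 → ℝ} (ha : a ≠ 0) : volume {x : V3 | pol a x = 0} = 0 := by
  have key := volume_affine_zero 2
    (fun x => (a 0 + a 1 * x 0) + (a 2 + a 4 * x 0) * x 1)
    (fun x => (a 3 + a 5 * x 0) + (a 6 + a 7 * x 0) * x 1)
    (by fun_prop) (by fun_prop) (by simp) (by simp) ?_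
  · convert key using 5 with x
    simp only [pol]; ring
  · by_cases hd : a 3 = 0 ∧ a 5 = 0 ∧ a 6 = 0 ∧ a 7 = 0
    · right
      refine ⟨by simp [hd], volume_zero_two_var _ _ _ _ ?_⟩
      rintro ⟨h0, h1, h2, h4⟩
      apply ha
      ext i
      fin_cases i <;> simp [hd, h0, h1, h2, h4]
    · left; exact volume_zero_two_var _ _ _ _ hd

/-! ### Uniform estimates of sublevel sets on the cube -/

theorem isCompact_cube (h : ℝ) : IsCompact (cube h) := by
  have : cube h = (EuclideanSpace.equiv (Fin 3) ℝ).toHomeomorph ⁻¹'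
      (Set.pi Set.univ fun _ => Set.Icc 0 h) := by
    ext x; simp [cube, Set.mem_pi, -Set.mem_Icc, -Set.pi_univ_Icc]
  rw [this, Homeomorph.isCompact_preimage]
  exact isCompact_univ_pi fun _ => isCompact_Icc

theorem volume_cube (h : ℝ) (hh : 0 < h) : volume (cube h) = ENNReal.ofReal (h ^ 3) := by
  have : cube h = (@WithLp.ofLp 2 (Fin 3 → ℝ)) ⁻¹'
      (Set.pi Set.univ fun _ => Set.Icc 0 h) := by
    ext x; simp [cube, Set.mem_pi, -Set.mem_Icc, -Set.pi_univ_Icc]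
  rw [this, (PiLp.volume_preserving_ofLp (Fin 3)).measure_preimage
    (MeasurableSet.univ_pi fun _ => measurableSet_Icc).nullMeasurableSet, volume_pi_pi]
  simp [ENNReal.ofReal_pow hh.le]

/-- Uniform smallness of the sublevel sets over coefficient vectors of norm one. -/
theorem exists_sublevel_bound {δ : ℝ} (hδ : 0 < δ) : ∃ ε : ℝ, 0 < ε ∧
    ∀ a ∈ Metric.sphere (0 : Fin 8 → ℝ) 1,
      volume {u ∈ cube 1 | |pol a u| ≤ ε} ≤ ENNReal.ofReal δ := by
  refine (isCompact_sphere (0 : Fin 8 → ℝ) 1).induction_on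
    (p := fun s => ∃ ε : ℝ, 0 < ε ∧
      ∀ a ∈ s, volume {u ∈ cube 1 | |pol a u| ≤ ε} ≤ ENNReal.ofReal δ) ?_ ?_ ?_ ?_
  · exact ⟨1, one_pos, by simp⟩
  · rintro s t hst ⟨ε, hε, h⟩
    exact ⟨ε, hε, fun a ha => h a (hst ha)⟩
  · rintro s t ⟨ε, hε, h⟩ ⟨ε', hε', h'⟩
    refine ⟨min ε ε', lt_min hε hε', ?_⟩
    rintro a (ha | ha)
    · exact (measure_mono (Set.inter_subset_inter_right _ fun u hu =>
        le_trans (α := ℝ) hu (min_le_left _ _))).trans (h a ha)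
    · exact (measure_mono (Set.inter_subset_inter_right _ fun u hu =>
        le_trans (α := ℝ) hu (min_le_right _ _))).trans (h' a ha)
  · intro a ha
    have ha0 : a ≠ 0 := ne_zero_of_mem_unit_sphere ⟨a, ha⟩
    let s : ℕ → Set V3 := fun n => {u ∈ cube 1 | |pol a u| ≤ 1 / ((n : ℝ) + 1)}
    have hsm : ∀ n, MeasurableSet (s n) := fun n =>
      (isCompact_cube 1).measurableSet.inter
        (isClosed_le (continuous_pol a).abs continuous_const).measurableSet
    have hanti : Antitone s := fun n m hnm u hu =>
      ⟨hu.1, hu.2.trans (one_div_le_one_div_of_le (by positivity) (by simpa using hnm))⟩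
    have hfin : ∃ n, volume (s n) ≠ ∞ :=
      ⟨0, ((measure_mono fun u hu => hu.1).trans_lt (isCompact_cube 1).measure_lt_top).ne⟩
    have hlim := tendsto_measure_iInter_atTop (μ := volume)
      (fun n => (hsm n).nullMeasurableSet) hanti hfin
    have h0 : volume (⋂ n, s n) = 0 := by
      refine measure_mono_null ?_ (volume_pol_eq_zero ha0)
      intro u hu
      have h1 : ∀ n : ℕ, |pol a u| ≤ 1 / ((n : ℝ) + 1) := fun n => (Set.mem_iInter.1 hu n).2
      have h2 : |pol a u| ≤ 0 :=
        ge_of_tendsto' tendsto_one_div_add_atTop_nhds_zero_nat h1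
      exact abs_nonpos_iff.1 h2
    rw [h0] at hlim
    obtain ⟨n, hn⟩ := (hlim.eventually (gt_mem_nhds (ENNReal.ofReal_pos.2 hδ))).exists
    have hε : (0 : ℝ) < 1 / ((n : ℝ) + 1) := by positivity
    set ε : ℝ := 1 / ((n : ℝ) + 1)
    -- nearby polynomials differ by at most `ε / 2` on the unit cube
    refine ⟨Metric.ball a (ε / 16),
      mem_nhdsWithin_of_mem_nhds (Metric.ball_mem_nhds _ (by positivity)), ε / 2, by positivity, fun b hb => (measure_mono ?_).trans hn.le⟩
    intro u hu
    refine ⟨hu.1, ?_⟩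
    have h1 := abs_pol_le (a - b) hu.1
    have h2 : ‖a - b‖ < ε / 16 := by
      rw [← dist_eq_norm, dist_comm]; exact hb
    have h3 : pol a u = pol (a - b) u + pol b u := by simp [pol]; ring
    have h4 := hu.2
    have h5 := abs_add_le (pol (a - b) u) (pol b u)
    rw [← h3] at h5
    linarith

theorem pol_const_smul (c : ℝ) (a : Fin 8 → ℝ) (u : V3) : pol (c • a) u = c * pol a u := by
  simp [pol]; ring

open scoped Pointwise in
/-- Rescaled sublevel estimate on the cube of side `h`, for arbitrary coefficients. -/
theorem exists_sublevel_bound_cube {δ : ℝ} (hδ : 0 < δ) : ∃ ε : ℝ, 0 < ε ∧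
    ∀ h : ℝ, 0 < h → ∀ a : Fin 8 → ℝ,
      volume {x ∈ cube h | |pol a x| < ε * ‖scaleCoeff h a‖} ≤ ENNReal.ofReal (δ * h ^ 3) := by
  obtain ⟨ε, hε, H⟩ := exists_sublevel_bound hδ
  refine ⟨ε, hε, fun h hh a => ?_⟩
  set b := scaleCoeff h a with hb
  have hset : {x ∈ cube h | |pol a x| < ε * ‖b‖} ⊆ h • {u ∈ cube 1 | |pol b u| < ε * ‖b‖} := by
    rintro x ⟨hx, hx'⟩
    refine (Set.mem_smul_set_iff_inv_smul_mem₀ hh.ne' _ _).2 ⟨fun i => ?_, ?_⟩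
    · have := hx i
      simp only [PiLp.smul_apply, smul_eq_mul]
      refine ⟨mul_nonneg (by positivity) this.1, ?_⟩
      rw [inv_mul_le_iff₀ hh]; simpa using this.2
    · rw [hb, ← pol_smul, smul_inv_smul₀ hh.ne']; exact hx'
  refine (measure_mono hset).trans ?_
  rw [Measure.addHaar_smul_of_nonneg _ hh.le, finrank_euclideanSpace, Fintype.card_fin, mul_comm δ,
    ENNReal.ofReal_mul (by positivity)]
  gcongr
  rcases eq_or_ne b 0 with h0 | h0
  · -- the strict inequality defining the set fails everywhere when the coefficients vanish
    have : {u : V3 | u ∈ cube 1 ∧ |pol b u| < ε * ‖b‖} = ∅ := by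
      ext u
      simp [h0]
    rw [this]; simp
  · have hn : 0 < ‖b‖ := norm_pos_iff.2 h0
    refine (measure_mono ?_).trans (H (‖b‖⁻¹ • b) (by simp [norm_smul, hn.ne']))
    rintro u ⟨hu, hu'⟩
    refine ⟨hu, ?_⟩
    rw [pol_const_smul, abs_mul, abs_of_pos (by positivity), inv_mul_le_iff₀ hn, mul_comm]
    exact hu'.le

/-! ### Gradient bounds and the Remez-type inequality -/

theorem hasFDerivAt_pol (a : Fin 8 → ℝ) (x : V3) :
    HasFDerivAt (pol a)
      ((a 1 + a 4 * x 1 + a 5 * x 2 + a 7 * (x 1 * x 2)) • EuclideanSpace.proj (𝕜 := ℝ) 0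
      + (a 2 + a 4 * x 0 + a 6 * x 2 + a 7 * (x 0 * x 2)) • EuclideanSpace.proj (𝕜 := ℝ) 1
      + (a 3 + a 5 * x 0 + a 6 * x 1 + a 7 * (x 0 * x 1)) • EuclideanSpace.proj (𝕜 := ℝ) 2 :
        V3 →L[ℝ] ℝ) x := by
  have hp : ∀ i : Fin 3, HasFDerivAt (fun y : V3 => y i) (EuclideanSpace.proj (𝕜 := ℝ) i) x :=
    fun i => (EuclideanSpace.proj (𝕜 := ℝ) i : V3 →L[ℝ] ℝ).hasFDerivAt
  have := (((((((hasFDerivAt_const (a 0) x).add ((hp 0).const_mul (a 1))).add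
    ((hp 1).const_mul (a 2))).add ((hp 2).const_mul (a 3))).add
    (((hp 0).mul (hp 1)).const_mul (a 4))).add (((hp 0).mul (hp 2)).const_mul (a 5))).add
    (((hp 1).mul (hp 2)).const_mul (a 6))).add
    ((((hp 0).mul (hp 1)).mul (hp 2)).const_mul (a 7))
  refine HasFDerivAt.congr_fderiv this ?_
  ext v
  simp
  ring

theorem norm_proj_le (i : Fin 3) : ‖(EuclideanSpace.proj (𝕜 := ℝ) i : V3 →L[ℝ] ℝ)‖ ≤ 1 :=
  ContinuousLinearMap.opNorm_le_bound _ zero_le_one fun x => by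
    simpa using PiLp.norm_apply_le x i

theorem norm_fderiv_pol_le {h : ℝ} (hh : 0 < h) (a : Fin 8 → ℝ) {x : V3} (hx : x ∈ cube h) :
    ‖fderiv ℝ (pol a) x‖ ≤ 12 * ‖scaleCoeff h a‖ * h⁻¹ := by
  set N := ‖scaleCoeff h a‖ with hN
  have hb : ∀ i, |scaleCoeff h a i| ≤ N := fun i => norm_le_pi_norm (scaleCoeff h a) i
  -- each partial derivative is a sum of four terms `c * s` with `|c * h * t| ≤ N`, `|s| ≤ t`
  have hc : ∀ c s t : ℝ, 0 ≤ s → s ≤ t → |c * h * t| ≤ N → |c * s| ≤ N * h⁻¹ := by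
    intro c s t hs hst hN
    rw [← div_eq_mul_inv, le_div_iff₀ hh]
    refine le_trans ?_ hN
    rw [abs_mul, abs_mul, abs_mul, abs_of_nonneg hs, abs_of_pos hh, abs_of_nonneg (hs.trans hst),
      mul_right_comm]
    gcongr
  have h1 : ∀ c, |c * h| ≤ N → |c| ≤ N * h⁻¹ := fun c hcN => by
    simpa using hc c 1 1 zero_le_one le_rfl (by simpa using hcN)
  have h2 : ∀ c i, |c * h ^ 2| ≤ N → |c * x i| ≤ N * h⁻¹ := fun c i hcN =>
    hc c _ h (hx i).1 (hx i).2 (by rwa [mul_assoc, ← pow_two])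
  have h3 : ∀ c i j, |c * h ^ 3| ≤ N → |c * (x i * x j)| ≤ N * h⁻¹ := fun c i j hcN =>
    hc c _ (h * h) (mul_nonneg (hx i).1 (hx j).1)
      (mul_le_mul (hx i).2 (hx j).2 (hx j).1 hh.le) (by convert hcN using 2; ring)
  have h4 : ∀ p q r s M : ℝ, |p| ≤ M → |q| ≤ M → |r| ≤ M → |s| ≤ M → |p + q + r + s| ≤ 4 * M := by
    intro p q r s M hp hq hr hs
    rw [abs_le] at *
    exact ⟨by linarith, by linarith⟩
  have b1 := hb 1
  have b2 := hb 2
  have b3 := hb 3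
  have b4 := hb 4
  have b5 := hb 5
  have b6 := hb 6
  have b7 := hb 7
  simp only [scaleCoeff, Matrix.cons_val] at b1 b2 b3 b4 b5 b6 b7
  have hs : ∀ (c : ℝ) (i : Fin 3), |c| ≤ 4 * (N * h⁻¹) →
      ‖c • (EuclideanSpace.proj (𝕜 := ℝ) i : V3 →L[ℝ] ℝ)‖ ≤ 4 * (N * h⁻¹) := fun c i hcN => by
    rw [norm_smul]
    exact (mul_le_of_le_one_right (norm_nonneg _) (norm_proj_le i)).trans hcN
  rw [(hasFDerivAt_pol a x).fderiv]
  refine (norm_add₃_le).trans ?_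
  have e0 := hs _ 0 (h4 _ _ _ _ _ (h1 _ b1) (h2 _ 1 b4) (h2 _ 2 b5) (h3 _ 1 2 b7))
  have e1 := hs _ 1 (h4 _ _ _ _ _ (h1 _ b2) (h2 _ 0 b4) (h2 _ 2 b6) (h3 _ 0 2 b7))
  have e2 := hs _ 2 (h4 _ _ _ _ _ (h1 _ b3) (h2 _ 0 b5) (h2 _ 1 b6) (h3 _ 0 1 b7))
  linarith

/-- Remez-type inequality: the gradient of `p ∈ Q₁` on the whole cube is controlled by the
`L²` norm of `p` on any measurable subset occupying a fixed fraction of the cube. -/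
theorem exists_gradient_bound {γ : ℝ} (hγ : 0 < γ) : ∃ K : ℝ, 0 < K ∧
    ∀ h : ℝ, 0 < h → ∀ S : Set V3, MeasurableSet S → S ⊆ cube h →
      ENNReal.ofReal (γ * h ^ 3) ≤ volume S → ∀ p : V3 → ℝ, IsQ1 p → ∀ x ∈ cube h,
        ‖fderiv ℝ p x‖ ^ 2 ≤ K * (h⁻¹) ^ 5 * ∫ X in S, (p X) ^ 2 := by
  obtain ⟨ε, hε, H⟩ := exists_sublevel_bound_cube (half_pos hγ)
  refine ⟨288 / (ε ^ 2 * γ), by positivity, fun h hh S hS hSc hvol p hp x hx => ?_⟩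
  obtain ⟨a, rfl⟩ := (isQ1_iff_exists_pol p).1 hp
  have hgrad := norm_fderiv_pol_le hh a hx
  have Hb := H h hh a
  set N := ‖scaleCoeff h a‖ with hN
  have hN0 : 0 ≤ N := norm_nonneg _
  set E : Set V3 := {x ∈ cube h | |pol a x| < ε * N} with hE
  have hEm : MeasurableSet E := (isCompact_cube h).measurableSet.inter
    (isOpen_lt (continuous_pol a).abs continuous_const).measurableSet
  have hSfin : volume S ≠ ∞ :=
    ((measure_mono hSc).trans_lt (isCompact_cube h).measure_lt_top).ne
  have hEfin : volume E ≠ ∞ := (Hb.trans_lt ENNReal.ofReal_lt_top).ne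
  have hSE : γ / 2 * h ^ 3 ≤ volume.real (S \ E) := by
    have h1 : γ * h ^ 3 ≤ volume.real S := (ENNReal.ofReal_le_iff_le_toReal hSfin).1 hvol
    have h2 : volume.real E ≤ γ / 2 * h ^ 3 := ENNReal.toReal_le_of_le_ofReal (by positivity) Hb
    have h3 : volume.real S - volume.real E ≤ volume.real (S \ E) := le_measureReal_sdiff hEfin
    linarith
  have hint : IntegrableOn (fun X => (pol a X) ^ 2) S :=
    (((continuous_pol a).pow 2).continuousOn.integrableOn_compact (isCompact_cube h)).mono_set hSc
  have hlow : (ε * N) ^ 2 * (γ / 2 * h ^ 3) ≤ ∫ X in S, (pol a X) ^ 2 := by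
    calc (ε * N) ^ 2 * (γ / 2 * h ^ 3) ≤ (ε * N) ^ 2 * volume.real (S \ E) := by gcongr
      _ ≤ ∫ X in S \ E, (pol a X) ^ 2 := by
          refine setIntegral_ge_of_const_le_real (hS.diff hEm)
            (measure_ne_top_of_subset Set.sdiff_subset hSfin) ?_ (hint.mono_set Set.sdiff_subset)
          rintro X ⟨hXS, hXE⟩
          have : ε * N ≤ |pol a X| := by
            by_contra hlt
            exact hXE ⟨hSc hXS, not_le.1 hlt⟩
          rw [← sq_abs (pol a X)]
          gcongr
      _ ≤ ∫ X in S, (pol a X) ^ 2 :=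
          setIntegral_mono_set hint (Filter.Eventually.of_forall fun X => sq_nonneg _)
            Set.sdiff_subset.eventuallyLE
  calc ‖fderiv ℝ (pol a) x‖ ^ 2 ≤ (12 * N * h⁻¹) ^ 2 := by gcongr
    _ = 288 / (ε ^ 2 * γ) * (h⁻¹) ^ 5 * ((ε * N) ^ 2 * (γ / 2 * h ^ 3)) := by
        field_simp; ring
    _ ≤ _ := by gcongr

/-! ### The extension operator -/

theorem differentiable_of_isQ1 {p : V3 → ℝ} (hp : IsQ1 p) : Differentiable ℝ p := by
  obtain ⟨a, rfl⟩ := (isQ1_iff_exists_pol p).1 hp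
  exact fun x => (hasFDerivAt_pol a x).differentiableAt

theorem isQ1_CT (βm βp : ℝ) (F n : V3) {p : V3 → ℝ} (hp : IsQ1 p) : IsQ1 (CT βm βp F n p) := by
  obtain ⟨a₀, a₁, a₂, a₃, a₄, a₅, a₆, a₇, hp⟩ := hp
  obtain ⟨c, hc⟩ : ∃ c, c = (βm / βp - 1) * (fderiv ℝ p F n) := ⟨_, rfl⟩
  refine ⟨a₀ - c * (F 0 * n 0 + F 1 * n 1 + F 2 * n 2), a₁ + c * n 0, a₂ + c * n 1, a₃ + c * n 2,
    a₄, a₅, a₆, a₇, fun x => ?_⟩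
  rw [CT, ← hc, hp]
  simp [PiLp.inner_apply, Fin.sum_univ_three]
  ring

theorem hasFDerivAt_CT (βm βp : ℝ) (F n : V3) {p : V3 → ℝ} (hp : Differentiable ℝ p) (X : V3) :
    HasFDerivAt (CT βm βp F n p)
      (fderiv ℝ p X + ((βm / βp - 1) * (fderiv ℝ p F n)) • innerSL ℝ n) X := by
  have h1 : HasFDerivAt (fun X : V3 => ⟪X - F, n⟫) (innerSL ℝ n) X := by
    have : (fun X : V3 => ⟪X - F, n⟫) = fun X => innerSL ℝ n X - ⟪F, n⟫ := by
      ext Y; rw [inner_sub_left, innerSL_apply_apply, real_inner_comm]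
    rw [this]
    exact (innerSL ℝ n).hasFDerivAt.sub_const _
  exact (hp X).hasFDerivAt.add (h1.const_mul _)

theorem norm_fderiv_CT_le (βm βp : ℝ) (F n : V3) (hn : ‖n‖ = 1) {p : V3 → ℝ}
    (hp : Differentiable ℝ p) (X : V3) :
    ‖fderiv ℝ (CT βm βp F n p) X‖ ≤ ‖fderiv ℝ p X‖ + |βm / βp - 1| * ‖fderiv ℝ p F‖ := by
  rw [(hasFDerivAt_CT βm βp F n hp X).fderiv]
  refine (norm_add_le _ _).trans ?_
  rw [norm_smul, innerSL_apply_norm, hn, mul_one, norm_mul, Real.norm_eq_abs]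
  gcongr
  simpa [hn] using (fderiv ℝ p F).le_opNorm n

/-- Exchanging `β⁻` and `β⁺` inverts the extension operator. -/
theorem CT_CT {βm βp : ℝ} (hm : 0 < βm) (hp : 0 < βp) (F n : V3) (hn : ‖n‖ = 1) {p : V3 → ℝ}
    (hd : Differentiable ℝ p) : CT βp βm F n (CT βm βp F n p) = p := by
  have h1 : fderiv ℝ (CT βm βp F n p) F n = βm / βp * fderiv ℝ p F n := by
    rw [(hasFDerivAt_CT βm βp F n hd F).fderiv]
    simp [hn]
    ring
  ext X
  rw [CT, h1, CT]
  field_simp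
  ring

/-! ### The inverse inequality -/

/-- Uniform gradient bounds on the two pieces of the cube bound the left-hand side. -/
theorem sum_integral_sq_le {h M : ℝ} (hh : 0 < h) {Tm Tp : Set V3} (hTm : Tm ⊆ cube h)
    (hTp : Tp ⊆ cube h) (f g : V3 → V3 →L[ℝ] ℝ) (hf : ∀ x ∈ cube h, ‖f x‖ ^ 2 ≤ M)
    (hg : ∀ x ∈ cube h, ‖g x‖ ^ 2 ≤ M) :
    (∫ X in Tm, ‖f X‖ ^ 2) + ∫ X in Tp, ‖g X‖ ^ 2 ≤ 2 * M * h ^ 3 := by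
  have key : ∀ (S : Set V3) (_ : S ⊆ cube h) (f : V3 → V3 →L[ℝ] ℝ)
      (_ : ∀ x ∈ cube h, ‖f x‖ ^ 2 ≤ M), ∫ X in S, ‖f X‖ ^ 2 ≤ M * h ^ 3 := by
    intro S hS f hf
    have hM : 0 ≤ M := (sq_nonneg _).trans (hf 0 fun i => ⟨le_rfl, hh.le⟩)
    have hle : volume S ≤ ENNReal.ofReal (h ^ 3) := (measure_mono hS).trans (volume_cube h hh).le
    have := norm_setIntegral_le_of_norm_le_const (f := fun X => ‖f X‖ ^ 2) (C := M)
      (hle.trans_lt ENNReal.ofReal_lt_top) (fun x hx => by simpa using hf x (hS hx))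
    refine (le_abs_self _).trans (this.trans ?_)
    gcongr
    exact ENNReal.toReal_le_of_le_ofReal (by positivity) hle
  linarith [key Tm hTm f hf, key Tp hTp g hg]

/-- Inverse inequality of Theorem 4.10:
`‖∇φ_T‖_{L²(T)} ≤ C (β⁺/β⁻) h^{−1} ‖φ_T‖_{L²(T)}` for trilinear IFE functions on an
interface element. -/
theorem inverse_inequality (γ : ℝ) (hγ0 : 0 < γ) (hγ1 : γ ≤ 1) :
    ∃ C : ℝ, 0 < C ∧
      ∀ (h : ℝ), 0 < h →
      ∀ (Tm Tp : Set V3), MeasurableSet Tm → MeasurableSet Tp →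
        Disjoint Tm Tp → Tm ∪ Tp = cube h →
      ∀ (F nbar : V3), ‖nbar‖ = 1 →
      ∀ (βm βp : ℝ), 0 < βm → βm ≤ βp →
      (∃ P : Set V3, IsTetra P ∧ (P ⊆ Tm ∨ P ⊆ Tp) ∧
          ENNReal.ofReal (γ * h ^ 3) ≤ volume P ∧ F ∈ closure P) →
      ∀ p : V3 → ℝ, IsQ1 p →
        Real.sqrt ((∫ X in Tm, ‖fderiv ℝ p X‖ ^ 2) +
            ∫ X in Tp, ‖fderiv ℝ (CT βm βp F nbar p) X‖ ^ 2) ≤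
          C * (βp / βm) * h⁻¹ *
            Real.sqrt ((∫ X in Tm, (p X) ^ 2) +
              ∫ X in Tp, (CT βm βp F nbar p X) ^ 2) := by
  obtain ⟨K, hK, H⟩ := exists_gradient_bound hγ0
  refine ⟨Real.sqrt (8 * K), by positivity, ?_⟩
  intro h hh Tm Tp hTm hTp _ hU F n hn βm βp hβm hβ hP p hp
  have hβp : 0 < βp := hβm.trans_le hβ
  obtain ⟨P, _, hPT, hvol, hF⟩ := hP
  have hm : Tm ⊆ cube h := hU ▸ Set.subset_union_left
  have hpl : Tp ⊆ cube h := hU ▸ Set.subset_union_right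
  have hPc : P ⊆ cube h := hPT.elim (fun h1 => h1.trans hm) (fun h1 => h1.trans hpl)
  have hFc : F ∈ cube h := closure_minimal hPc (isCompact_cube h).isClosed hF
  set r := βp / βm with hr
  have hr1 : 1 ≤ r := (one_le_div hβm).2 hβ
  set q := CT βm βp F n p with hq
  have hqQ : IsQ1 q := isQ1_CT βm βp F n hp
  have hIm : 0 ≤ ∫ X in Tm, (p X) ^ 2 := integral_nonneg fun _ => sq_nonneg _
  have hIp : 0 ≤ ∫ X in Tp, (q X) ^ 2 := integral_nonneg fun _ => sq_nonneg _
  set I := (∫ X in Tm, (p X) ^ 2) + ∫ X in Tp, (q X) ^ 2 with hI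
  have hI0 : 0 ≤ I := add_nonneg hIm hIp
  set G := Real.sqrt (K * (h⁻¹) ^ 5 * I) with hG
  have hG0 : 0 ≤ G := Real.sqrt_nonneg _
  have hGsq : G ^ 2 = K * (h⁻¹) ^ 5 * I := Real.sq_sqrt (by positivity)
  have hbound : (∀ x ∈ cube h, ‖fderiv ℝ p x‖ ≤ 2 * r * G) ∧
      ∀ x ∈ cube h, ‖fderiv ℝ q x‖ ≤ 2 * r * G := by
    rcases hPT with hPT | hPT
    · have hb : ∀ x ∈ cube h, ‖fderiv ℝ p x‖ ≤ G := fun x hx => by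
        refine Real.le_sqrt_of_sq_le ((H h hh Tm hTm hm (hvol.trans (measure_mono hPT)) p hp x
          hx).trans ?_)
        gcongr
        linarith
      have hc : |βm / βp - 1| ≤ 1 := by
        have h1 : βm / βp ≤ 1 := (div_le_one hβp).2 hβ
        have h2 : 0 < βm / βp := by positivity
        exact abs_le.2 ⟨by linarith, by linarith⟩
      refine ⟨fun x hx => (hb x hx).trans (by nlinarith), fun x hx => ?_⟩
      refine (norm_fderiv_CT_le βm βp F n hn (differentiable_of_isQ1 hp) x).trans ?_
      have h1 := mul_le_mul hc (hb F hFc) (norm_nonneg _) zero_le_one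
      nlinarith [hb x hx]
    · have hb : ∀ x ∈ cube h, ‖fderiv ℝ q x‖ ≤ G := fun x hx => by
        refine Real.le_sqrt_of_sq_le ((H h hh Tp hTp hpl (hvol.trans (measure_mono hPT)) q hqQ x
          hx).trans ?_)
        gcongr
        linarith
      refine ⟨fun x hx => ?_, fun x hx => (hb x hx).trans (by nlinarith)⟩
      rw [← CT_CT hβm hβp F n hn (differentiable_of_isQ1 hp)]
      refine (norm_fderiv_CT_le βp βm F n hn (differentiable_of_isQ1 hqQ) x).trans ?_
      rw [abs_of_nonneg (by linarith)]
      have h1 := mul_le_mul_of_nonneg_left (hb F hFc) (sub_nonneg.2 hr1)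
      nlinarith [hb x hx]
  have hsum := sum_integral_sq_le (M := (2 * r * G) ^ 2) hh hm hpl (fderiv ℝ p) (fderiv ℝ q)
    (fun x hx => by gcongr; exact hbound.1 x hx) (fun x hx => by gcongr; exact hbound.2 x hx)
  refine Real.sqrt_le_iff.2 ⟨by positivity, hsum.trans (le_of_eq ?_)⟩
  rw [mul_pow, mul_pow, hGsq, mul_pow, mul_pow, mul_pow, Real.sq_sqrt (by positivity),
    Real.sq_sqrt hI0]
  field_simp
  ring
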